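/- Let V ∈ L¹(0,1) with ∫₀¹ V(t)dt = 0, and let f(u) = u²(2u⁴ − 6u³ + 5u² − 1). Define A₀ = ∫₀¹ f(u) (∫_u¹ V(t)V(t−u) dt) du, where V is extended 1-periodically. If V is real-valued with Fourier coefficients V̂ₙ = ∫₀¹ V(t)e^{−2πint}dt (so V̂₀ = 0), then A₀ = ∑_{n≠0} |V̂ₙ|² · (6!·2)/(2·(2πn)⁶) = 720 ∑_{n≠0} |V̂ₙ|²/(2πn)⁶. In particular A₀ > 0 whenever V ≢ 0. -/

import Mathlib

/-!
`A₀` integrates `f (t - s) V(t) V(s)` over the triangle `s < t` of the unit square, so by symmetry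
`2 A₀` is the integral of `f |t - s| V(t) V(s)` over the whole square. The Fourier coefficients
`cₙ` of `f = 2 B₆ - 1/21` on `[0, 1]` are summable, real and even, so `f |t - s|` equals
`∑ cₙ eₙ(s) conj (eₙ(t))` with `eₙ(t) = exp (2πint)`, and integrating termwise gives
`2 A₀ = ∑ cₙ |V̂ₙ|²`. Off `n = 0` every `cₙ` is positive, and some `V̂ₙ` with `n ≠ 0` is nonzero
unless `V` is constant, since an integrable function on the circle that is orthogonal to all
trigonometric polynomials is, by density, orthogonal to all continuous functions.
-/

open MeasureTheory Set Filter AddCircle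
open scoped Nat Real Topology ComplexConjugate BoundedContinuousFunction NNReal

theorem ae_eq_zero_of_forall_integral_boundedContinuousFunction_smul_eq_zero
    {X E : Type*} [TopologicalSpace X] [HasOuterApproxClosed X] [MeasurableSpace X] [BorelSpace X]
    [NormedAddCommGroup E] [NormedSpace ℝ E] [CompleteSpace E] {μ : Measure X} {f : X → E}
    (hf : Integrable f μ) (h : ∀ g : X →ᵇ ℝ≥0, ∫ x, g x • f x ∂μ = 0) : f =ᵐ[μ] 0 := by
  refine ae_eq_zero_of_forall_setIntegral_isClosed_eq_zero hf fun s hs => ?_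
  have htendsto : Tendsto (fun n => ∫ x, hs.apprSeq n x • f x ∂μ) atTop
      (𝓝 (∫ x, s.indicator (fun _ => (1 : ℝ≥0)) x • f x ∂μ)) := by
    refine tendsto_integral_of_dominated_convergence (fun x => ‖f x‖)
      (fun n => (hs.apprSeq n).continuous.aestronglyMeasurable.smul hf.1) hf.norm
      (fun n => .of_forall fun x => ?_) (.of_forall fun x => ?_)
    · rw [NNReal.smul_def, norm_smul, NNReal.norm_eq]
      exact mul_le_of_le_one_left (norm_nonneg _)
        (mod_cast HasOuterApproxClosed.apprSeq_apply_le_one hs n x)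
    · exact (tendsto_pi_nhds.1 (HasOuterApproxClosed.tendsto_apprSeq hs) x).smul_const _
  simp only [h] at htendsto
  rw [← integral_indicator hs.measurableSet, ← tendsto_nhds_unique htendsto tendsto_const_nhds]
  congr with x
  by_cases hx : x ∈ s <;> simp [hx]

section Uniqueness

variable {T : ℝ} [Fact (0 < T)] {E : Type*} [NormedAddCommGroup E] [NormedSpace ℂ E]

theorem integral_continuousMap_smul_eq_zero_of_fourierCoeff_eq_zero {F : AddCircle T → E}
    (hF : Integrable F haarAddCircle) (h : ∀ n, fourierCoeff F n = 0) (g : C(AddCircle T, ℂ)) :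
    ∫ x, g x • F x ∂haarAddCircle = 0 := by
  have hint (g : C(AddCircle T, ℂ)) : Integrable (fun x => g x • F x) haarAddCircle :=
    hF.bdd_smul ‖g‖ g.continuous.aestronglyMeasurable (.of_forall g.norm_coe_le_norm)
  let pairing : C(AddCircle T, ℂ) →L[ℂ] E :=
    LinearMap.mkContinuous
      { toFun := fun g => ∫ x, g x • F x ∂haarAddCircle
        map_add' := fun g k => by
          simp only [ContinuousMap.add_apply, add_smul, integral_add (hint g) (hint k)]
        map_smul' := fun c g => by
          simp only [ContinuousMap.smul_apply, smul_assoc, integral_smul, RingHom.id_apply] }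
      (∫ x, ‖F x‖ ∂haarAddCircle) fun g => by
        rw [mul_comm, ← integral_const_mul]
        refine norm_integral_le_of_norm_le (hF.norm.const_mul _) (.of_forall fun x => ?_)
        rw [norm_smul]
        gcongr
        exact g.norm_coe_le_norm x
  have hspan : Submodule.span ℂ (range (fourier (T := T))) ≤ pairing.ker := by
    rw [Submodule.span_le]
    rintro _ ⟨n, rfl⟩
    change ∫ x, fourier n x • F x ∂haarAddCircle = 0
    simpa only [fourierCoeff, neg_neg] using h (-n)
  have hker := Submodule.topologicalClosure_minimal _ hspan pairing.isClosed_ker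
  rw [span_fourier_closure_eq_top] at hker
  exact hker (Submodule.mem_top (x := g))

theorem ae_eq_zero_of_fourierCoeff_eq_zero [CompleteSpace E] {F : AddCircle T → E}
    (hF : Integrable F haarAddCircle) (h : ∀ n, fourierCoeff F n = 0) :
    F =ᵐ[haarAddCircle] 0 := by
  refine ae_eq_zero_of_forall_integral_boundedContinuousFunction_smul_eq_zero hF fun g => ?_
  have := integral_continuousMap_smul_eq_zero_of_fourierCoeff_eq_zero hF h
    ⟨fun x => ((g x : ℝ) : ℂ), by fun_prop⟩
  simpa [NNReal.smul_def] using this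

theorem fourierCoeff_const_eq_single [CompleteSpace E] (c : E) :
    fourierCoeff (fun _ : AddCircle T => c) = Pi.single 0 c := by
  ext n
  have hone := congrFun (fourierCoeff_fourier (T := T) 0) n
  simp only [fourierCoeff, fourier_zero, smul_eq_mul, mul_one] at hone
  rw [fourierCoeff, integral_smul_const, hone, Pi.single_apply, Pi.single_apply, ite_smul, one_smul,
    zero_smul]

theorem ae_eq_const_of_fourierCoeff_eq_zero [CompleteSpace E] {F : AddCircle T → E}
    (hF : Integrable F haarAddCircle) (h : ∀ n ≠ 0, fourierCoeff F n = 0) :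
    F =ᵐ[haarAddCircle] fun _ => fourierCoeff F 0 := by
  have hG : (F + fun _ => - fourierCoeff F 0) =ᵐ[haarAddCircle] 0 :=
    ae_eq_zero_of_fourierCoeff_eq_zero (hF.add (integrable_const _)) fun n => by
      rw [fourierCoeff.add hF (integrable_const _), fourierCoeff_const_eq_single]
      rcases eq_or_ne n 0 with rfl | hn
      · simp
      · simp [hn, h n hn]
  filter_upwards [hG] with x hx
  simpa [add_neg_eq_zero] using hx

end Uniqueness

theorem ae_eq_const_of_fourierCoeffOn_eq_zero {a b : ℝ} (hab : a < b) {f : ℝ → ℂ}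
    (hf : IntegrableOn f (Ioc a b)) (h : ∀ n ≠ 0, fourierCoeffOn hab f n = 0) :
    ∀ᵐ t ∂volume.restrict (Ioc a b), f t = fourierCoeffOn hab f 0 := by
  have : Fact (0 < b - a) := ⟨sub_pos.2 hab⟩
  have hmk := AddCircle.measurePreserving_mk (b - a) a
  rw [add_sub_cancel] at hmk
  have hF : Integrable (liftIoc (b - a) a f) := by
    rw [IntegrableOn, ← memLp_one_iff_integrable] at hf
    rw [← memLp_one_iff_integrable]
    refine MemLp.memLp_liftIoc ?_
    rwa [add_sub_cancel]
  have hF' : Integrable (liftIoc (b - a) a f) haarAddCircle := by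
    rwa [← memLp_one_iff_integrable, memLp_haarAddCircle_iff, memLp_one_iff_integrable]
  have hconst : liftIoc (b - a) a f =ᵐ[volume] fun _ => fourierCoeffOn hab f 0 := by
    rw [volume_eq_smul_haarAddCircle]
    exact Measure.ae_smul_measure (ae_eq_const_of_fourierCoeff_eq_zero hF' h) _
  filter_upwards [hmk.quasiMeasurePreserving.ae hconst, ae_restrict_mem measurableSet_Ioc]
    with t ht htmem
  rwa [liftIoc_coe_apply (by rwa [add_sub_cancel])] at ht

theorem integral_prod_eq_two_nsmul_setIntegral_lt {X E : Type*} [LinearOrder X]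
    [TopologicalSpace X] [OrderClosedTopology X] [SecondCountableTopology X] [MeasurableSpace X]
    [OpensMeasurableSpace X] [NormedAddCommGroup E] [NormedSpace ℝ E] {μ : Measure X} [SFinite μ]
    [NullSingletonClass μ] {k : X × X → E} (hk : Integrable k (μ.prod μ))
    (hsymm : ∀ p, k p.swap = k p) :
    ∫ p, k p ∂μ.prod μ = 2 • ∫ p in {p | p.2 < p.1}, k p ∂μ.prod μ := by
  have hlt : MeasurableSet {p : X × X | p.2 < p.1} := measurableSet_lt measurable_snd measurable_fst
  have hdiag : ∀ᵐ p ∂μ.prod μ, p.1 ≠ p.2 := by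
    rw [ae_iff, Measure.measure_prod_null
      (by simpa using measurableSet_eq_fun measurable_fst measurable_snd)]
    exact .of_forall fun x => by simp [preimage, measure_singleton]
  have hcompl : ({p : X × X | p.2 < p.1}ᶜ : Set (X × X)) =ᵐ[μ.prod μ]
      Prod.swap ⁻¹' {p | p.2 < p.1} := by
    filter_upwards [hdiag] with p hp
    exact propext ⟨fun h => (not_lt.1 h).lt_of_ne hp, fun h => not_lt.2 h.le⟩
  rw [← integral_add_compl hlt hk, setIntegral_congr_set hcompl, two_nsmul]
  congr 1
  rw [← Measure.measurePreserving_swap.setIntegral_preimage_emb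
    MeasurableEquiv.prodComm.measurableEmbedding k {p | p.2 < p.1}]
  simp only [hsymm]

theorem integral_mul_autocorrelation {G 𝕜 : Type*} [AddCommGroup G] [MeasurableSpace G]
    [MeasurableAdd₂ G] [MeasurableNeg G] {μ : Measure G} [SFinite μ] [μ.IsAddLeftInvariant]
    [μ.IsNegInvariant] [RCLike 𝕜] {h v w : G → 𝕜} {C : ℝ} (hh : AEStronglyMeasurable h μ)
    (hC : ∀ x, ‖h x‖ ≤ C) (hv : Integrable v μ) (hw : Integrable w μ) :
    ∫ u, h u * ∫ t, v t * w (t - u) ∂μ ∂μ =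
      ∫ p : G × G, h (p.1 - p.2) * (v p.1 * w p.2) ∂μ.prod μ := by
  have hcorr : Integrable (fun p : G × G => v p.2 * w (p.2 - p.1)) (μ.prod μ) := by
    simpa using hv.convolution_integrand (ContinuousLinearMap.mul 𝕜 𝕜) hw.comp_neg
  have hprod : Integrable (fun p : G × G => h (p.1 - p.2) * (v p.1 * w p.2)) (μ.prod μ) :=
    (hv.mul_prod hw).bdd_mul (hh.comp_quasiMeasurePreserving (quasiMeasurePreserving_sub μ μ))
      (.of_forall fun p => hC (p.1 - p.2))
  simp_rw [← integral_const_mul]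
  rw [integral_prod _ hprod, integral_integral_swap
    (hcorr.bdd_mul hh.comp_fst (.of_forall fun p => hC p.1))]
  congr with t
  rw [← integral_sub_left_eq_self _ μ t]
  simp only [sub_sub_cancel]

theorem setIntegral_lt_kernel_sub_mul {T : ℝ} (hT : 0 ≤ T) {f V : ℝ → ℝ}
    (hf : ContinuousOn f (Icc 0 T)) (hV : IntegrableOn V (Ioc 0 T)) :
    ∫ p in {p | p.2 < p.1}, f (p.1 - p.2) * (V p.1 * V p.2)
        ∂(volume.restrict (Ioc 0 T)).prod (volume.restrict (Ioc 0 T)) =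
      ∫ u in (0 : ℝ)..T, f u * ∫ t in u..T, V t * V (t - u) := by
  obtain ⟨C, hC⟩ := isCompact_Icc.exists_bound_of_continuousOn hf
  set h : ℝ → ℝ := (Ioc 0 T).indicator f with hh
  set W : ℝ → ℝ := (Ioc 0 T).indicator V with hW
  have hbound (u : ℝ) : ‖h u‖ ≤ C := by
    rw [hh, norm_indicator_eq_indicator_norm]
    exact indicator_apply_le' (fun hu => hC u (Ioc_subset_Icc_self hu))
      fun _ => (norm_nonneg _).trans (hC 0 ⟨le_rfl, hT⟩)
  have hmeas : AEStronglyMeasurable h :=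
    (aestronglyMeasurable_indicator_iff measurableSet_Ioc).2
      ((hf.mono Ioc_subset_Icc_self).aestronglyMeasurable measurableSet_Ioc)
  have hWint : Integrable W := (integrable_indicator_iff measurableSet_Ioc).2 hV
  have hcorr {u : ℝ} (hu : u ∈ Ioc 0 T) :
      ∫ t in u..T, V t * V (t - u) = ∫ t, W t * W (t - u) := by
    rw [intervalIntegral.integral_of_le hu.2, ← integral_indicator measurableSet_Ioc]
    congr with t
    simp only [hW, indicator_apply, mem_Ioc, sub_pos, tsub_le_iff_right] at hu ⊢
    grind
  calc
    _ = ∫ p : ℝ × ℝ, h (p.1 - p.2) * (W p.1 * W p.2) := by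
      have hlt := measurableSet_lt (measurable_snd (α := ℝ) (β := ℝ)) measurable_fst
      rw [Measure.prod_restrict, Measure.restrict_restrict hlt,
        ← integral_indicator (hlt.inter (measurableSet_Ioc.prod measurableSet_Ioc)),
        ← Measure.volume_eq_prod]
      congr with p
      simp only [hh, hW, indicator_apply, mem_inter_iff, mem_prod, mem_ofPred_eq, mem_Ioc, sub_pos,
        tsub_le_iff_right]
      grind
    _ = ∫ u, h u * ∫ t, W t * W (t - u) :=
      (integral_mul_autocorrelation hmeas hbound hWint hWint).symm
    _ = _ := by
      rw [intervalIntegral.integral_of_le hT, ← integral_indicator measurableSet_Ioc]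
      congr with u
      by_cases hu : u ∈ Ioc 0 T
      · simp only [hh, indicator_of_mem hu, hcorr hu]
      · simp only [hh, indicator_of_notMem hu, zero_mul]

theorem integrable_kernel_abs_sub_mul {T : ℝ} {f V : ℝ → ℝ}
    (hf : ContinuousOn f (Icc 0 T)) (hV : IntegrableOn V (Ioc 0 T)) :
    Integrable (fun p : ℝ × ℝ => f |p.1 - p.2| * (V p.1 * V p.2))
      ((volume.restrict (Ioc 0 T)).prod (volume.restrict (Ioc 0 T))) := by
  obtain ⟨C, hC⟩ := isCompact_Icc.exists_bound_of_continuousOn hf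
  have hmaps : MapsTo (fun p : ℝ × ℝ => |p.1 - p.2|) (Ioc 0 T ×ˢ Ioc 0 T) (Icc 0 T) :=
    fun p ⟨h₁, h₂⟩ => ⟨abs_nonneg _, abs_le.2 ⟨by linarith [h₁.1, h₂.2], by linarith [h₁.2, h₂.1]⟩⟩
  have hsq : MeasurableSet (Ioc 0 T ×ˢ Ioc 0 T) := measurableSet_Ioc.prod measurableSet_Ioc
  refine (hV.mul_prod hV).bdd_mul (c := C) ?_ ?_ <;> rw [Measure.prod_restrict]
  · exact (hf.comp (by fun_prop) hmaps).aestronglyMeasurable hsq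
  · filter_upwards [ae_restrict_mem hsq] with p hp using hC _ (hmaps hp)

theorem integral_kernel_abs_sub_mul {T : ℝ} (hT : 0 ≤ T) {f V : ℝ → ℝ}
    (hf : ContinuousOn f (Icc 0 T)) (hV : IntegrableOn V (Ioc 0 T)) :
    ∫ p, f |p.1 - p.2| * (V p.1 * V p.2)
        ∂(volume.restrict (Ioc 0 T)).prod (volume.restrict (Ioc 0 T)) =
      2 * ∫ u in (0 : ℝ)..T, f u * ∫ t in u..T, V t * V (t - u) := by
  rw [integral_prod_eq_two_nsmul_setIntegral_lt (integrable_kernel_abs_sub_mul hf hV)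
    fun p => by simp only [Prod.fst_swap, Prod.snd_swap, abs_sub_comm, mul_comm],
    ← setIntegral_lt_kernel_sub_mul hT hf hV, nsmul_eq_mul, Nat.cast_ofNat]
  congr 1
  refine setIntegral_congr_fun (measurableSet_lt measurable_snd measurable_fst) fun p hp => ?_
  have hlt : p.2 < p.1 := hp
  simp only [abs_of_pos (sub_pos.2 hlt)]

theorem hasSum_mul_norm_integral_mul_sq {X ι : Type*} [Countable ι] [MeasurableSpace X]
    {μ : Measure X} [SFinite μ] {e : ι → X → ℂ} (he : ∀ i, AEStronglyMeasurable (e i) μ)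
    (he_le : ∀ i x, ‖e i x‖ ≤ 1) {c : ι → ℂ} (hc : Summable c) {K : X × X → ℂ}
    (hK : ∀ᵐ p ∂μ.prod μ, HasSum (fun i => c i * (e i p.1 * conj (e i p.2))) (K p))
    {F : X → ℂ} (hF : Integrable F μ) :
    HasSum (fun i => c i * (‖∫ x, e i x * F x ∂μ‖ : ℂ) ^ 2)
      (∫ p, K p * (F p.1 * conj (F p.2)) ∂μ.prod μ) := by
  set term : ι → X × X → ℂ := fun i p => c i * ((e i p.1 * F p.1) * conj (e i p.2 * F p.2))
  have heF (i : ι) : Integrable (fun x => e i x * F x) μ :=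
    hF.bdd_mul (he i) (.of_forall (he_le i))
  have hconj (i : ι) : Integrable (fun x => conj (e i x * F x)) μ :=
    LinearIsometryEquiv.integrable_comp_iff Complex.conjLIE |>.2 (heF i)
  have hterm (i : ι) : Integrable (term i) (μ.prod μ) :=
    ((heF i).mul_prod (hconj i)).const_mul (c i)
  have hterm_le (i : ι) : ∫ p, ‖term i p‖ ∂μ.prod μ ≤ ‖c i‖ * (∫ x, ‖F x‖ ∂μ) ^ 2 := by
    rw [sq, ← integral_prod_mul, ← integral_const_mul]
    refine integral_mono (hterm i).norm ((hF.norm.mul_prod hF.norm).const_mul _) fun p => ?_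
    have h₁ := mul_le_of_le_one_left (norm_nonneg (F p.1)) (he_le i p.1)
    have h₂ := mul_le_of_le_one_left (norm_nonneg (F p.2)) (he_le i p.2)
    simp only [term, norm_mul, RCLike.norm_conj]
    gcongr
  have hsum := hasSum_integral_of_summable_integral_norm hterm <|
    .of_nonneg_of_le (fun i => integral_nonneg fun p => norm_nonneg _) hterm_le
      (hc.norm.mul_right _)
  convert! hsum using 1
  · ext i
    rw [integral_const_mul, integral_prod_mul (fun x => e i x * F x) (fun x => conj (e i x * F x)),
      integral_conj, Complex.mul_conj']
  · refine integral_congr_ae ?_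
    filter_upwards [hK] with p hp
    rw [← (hp.mul_right (F p.1 * conj (F p.2))).tsum_eq]
    simp only [term, map_mul]
    congr with i
    ring

theorem fourierCoeffOn_zero_one_eq_integral (F : ℝ → ℂ) (n : ℤ) :
    fourierCoeffOn zero_lt_one F n =
      ∫ t in Ioc (0 : ℝ) 1, fourier (-n) (t : UnitAddCircle) * F t := by
  rw [fourierCoeffOn_eq_integral, intervalIntegral.integral_of_le zero_le_one]
  norm_num

theorem fourierCoeffOn_zero_one_eq_integral_exp (F : ℝ → ℂ) (n : ℤ) :
    fourierCoeffOn zero_lt_one F n =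
      ∫ t in (0 : ℝ)..1, F t * Complex.exp (-2 * π * Complex.I * n * t) := by
  rw [fourierCoeffOn_zero_one_eq_integral, intervalIntegral.integral_of_le zero_le_one]
  congr with t
  rw [fourier_coe_apply, mul_comm]
  congr 2
  push_cast
  ring

theorem fourierCoeffOn_zero_one_ofReal_zero (V : ℝ → ℝ) :
    fourierCoeffOn zero_lt_one (fun t => (V t : ℂ)) 0 = ∫ t in (0 : ℝ)..1, V t := by
  simpa [fourierCoeffOn_zero_one_eq_integral_exp] using intervalIntegral.integral_ofReal

theorem exists_fourierCoeffOn_zero_one_ofReal_ne_zero {V : ℝ → ℝ} (hV : IntegrableOn V (Ioc 0 1))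
    (hne : ¬ ∀ᵐ t, t ∈ Icc (0 : ℝ) 1 → V t = ∫ s in (0 : ℝ)..1, V s) :
    ∃ n ≠ 0, fourierCoeffOn zero_lt_one (fun t => (V t : ℂ)) n ≠ 0 := by
  contrapose! hne
  rw [← ae_restrict_iff' measurableSet_Icc, ← restrict_Ioc_eq_restrict_Icc]
  have hconst := ae_eq_const_of_fourierCoeffOn_eq_zero zero_lt_one (f := fun t => (V t : ℂ))
    hV.ofReal hne
  rw [fourierCoeffOn_zero_one_ofReal_zero] at hconst
  exact hconst.mono fun t ht => Complex.ofReal_injective ht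

theorem fourier_sub_eq_mul_conj {T : ℝ} (n : ℤ) (x y : AddCircle T) :
    fourier n (x - y) = fourier n x * conj (fourier n y) := by
  rw [← fourier_neg, fourier_apply, fourier_apply, fourier_apply, smul_sub, sub_eq_add_neg,
    toCircle_add, Circle.coe_mul, neg_smul]

section FourierKernel

variable {f : ℝ → ℝ} {c : ℤ → ℝ}

theorem hasSum_fourier_of_abs_eq {x y : ℝ}
    (h : HasSum (fun n : ℤ => (c n : ℂ) * fourier n ((|x| : ℝ) : UnitAddCircle)) y) :
    HasSum (fun n : ℤ => (c n : ℂ) * fourier (-n) (x : UnitAddCircle)) y := by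
  rcases abs_choice x with hx | hx <;> rw [hx] at h
  · convert! Complex.hasSum_conj'.2 h using 2 with n
    · rw [map_mul, Complex.conj_ofReal, fourier_neg]
    · exact (Complex.conj_ofReal y).symm
  · simpa only [fourier_apply, AddCircle.coe_neg, smul_neg, neg_smul] using h

theorem continuousOn_of_hasSum_fourier {s : Set ℝ} (hc : Summable c)
    (hf : ∀ x ∈ s, HasSum (fun n : ℤ => (c n : ℂ) * fourier n (x : UnitAddCircle)) (f x)) :
    ContinuousOn f s := by
  have : Continuous fun x : ℝ => (∑' n : ℤ, (c n : ℂ) * fourier n (x : UnitAddCircle)).re := by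
    refine Complex.continuous_re.comp (continuous_tsum (fun n => ?_) hc.norm fun n x => ?_)
    · exact continuous_const.mul ((fourier n).continuous.comp (AddCircle.continuous_mk' 1))
    · rw [norm_mul, fourier_apply, Circle.norm_coe, mul_one, Complex.norm_real]
  refine this.continuousOn.congr fun x hx => ?_
  simp only [(hf x hx).tsum_eq, Complex.ofReal_re]

theorem hasSum_mul_norm_fourierCoeffOn_sq
    (hf : ∀ x ∈ Icc (0 : ℝ) 1,
      HasSum (fun n : ℤ => (c n : ℂ) * fourier n (x : UnitAddCircle)) (f x))
    {V : ℝ → ℝ} (hV : IntegrableOn V (Ioc 0 1)) :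
    HasSum (fun n : ℤ => c n * ‖fourierCoeffOn zero_lt_one (fun t => (V t : ℂ)) n‖ ^ 2)
      (2 * ∫ u in (0 : ℝ)..1, f u * ∫ t in u..1, V t * V (t - u)) := by
  have hc : Summable fun n => (c n : ℂ) := by
    simpa using (hf 0 (by simp)).summable
  have hfcont : ContinuousOn f (Icc 0 1) :=
    continuousOn_of_hasSum_fourier (Complex.summable_ofReal.1 hc) hf
  have hkernel : ∀ᵐ p : ℝ × ℝ ∂(volume.restrict (Ioc 0 1)).prod (volume.restrict (Ioc 0 1)),
      HasSum (fun n : ℤ => (c n : ℂ) * (fourier (-n) (p.1 : UnitAddCircle) *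
        conj (fourier (-n) (p.2 : UnitAddCircle)))) (f |p.1 - p.2| : ℂ) := by
    rw [Measure.prod_restrict]
    filter_upwards [ae_restrict_mem (measurableSet_Ioc.prod measurableSet_Ioc)] with p ⟨h₁, h₂⟩
    have habs : |p.1 - p.2| ∈ Icc (0 : ℝ) 1 :=
      ⟨abs_nonneg _, abs_le.2 ⟨by linarith [h₁.1, h₂.2], by linarith [h₁.2, h₂.1]⟩⟩
    simp only [← fourier_sub_eq_mul_conj]
    exact hasSum_fourier_of_abs_eq (hf _ habs)
  have hmeas (n : ℤ) : AEStronglyMeasurable (fun t : ℝ => fourier (-n) (t : UnitAddCircle))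
      (volume.restrict (Ioc 0 1)) :=
    ((fourier (-n)).continuous.comp (AddCircle.continuous_mk' 1)).aestronglyMeasurable
  have hsum := hasSum_mul_norm_integral_mul_sq hmeas
    (fun n t => by rw [fourier_apply, Circle.norm_coe]) hc hkernel hV.ofReal
  rw [← integral_kernel_abs_sub_mul zero_le_one hfcont hV, ← Complex.hasSum_ofReal,
    ← integral_complex_ofReal]
  simpa [fourierCoeffOn_zero_one_eq_integral] using hsum

end FourierKernel

-- At `n = 0` the coefficient is `1 / 0 = 0`, as it should be: `B₂ₘ` has mean zero.
theorem hasSum_fourier_bernoulliFun_two_mul {m : ℕ} (hm : m ≠ 0) {x : ℝ} (hx : x ∈ Icc (0 : ℝ) 1) :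
    HasSum (fun n : ℤ => ((1 / (2 * π * n) ^ (2 * m) : ℝ) : ℂ) * fourier n (x : UnitAddCircle))
      (((-1) ^ (m + 1) / (2 * m)! * bernoulliFun (2 * m) x : ℝ)) := by
  have h := (hasSum_one_div_pow_mul_fourier_mul_bernoulliFun (k := 2 * m) (by lia) hx).mul_left
    (1 / (2 * π : ℂ) ^ (2 * m))
  convert! h using 1
  · ext n
    push_cast
    rw [mul_pow (2 * π : ℂ)]
    ring
  · have : (2 * π : ℂ) ≠ 0 := by simp [Real.pi_ne_zero]
    push_cast
    rw [mul_pow _ Complex.I, pow_mul Complex.I, Complex.I_sq]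
    field_simp
    ring

theorem bernoulliFun_eq_sum (k : ℕ) (x : ℝ) :
    bernoulliFun k x =
      ∑ i ∈ Finset.range (k + 1), (bernoulli i : ℝ) * k.choose i * x ^ (k - i) := by
  simp [bernoulliFun, Polynomial.bernoulli, Polynomial.eval_finsetSum, Polynomial.map_sum]

theorem bernoulliFun_six (x : ℝ) :
    bernoulliFun 6 x = x ^ 6 - 3 * x ^ 5 + 5 / 2 * x ^ 4 - 1 / 2 * x ^ 2 + 1 / 42 := by
  have bernoulli'_five : bernoulli' 5 = 0 := bernoulli'_eq_zero_of_odd (by decide) (by norm_num)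
  have bernoulli'_six : bernoulli' 6 = 1 / 42 := by
    rw [bernoulli'_def]
    norm_num [Finset.sum_range_succ, Nat.choose, bernoulli'_five]
  simp only [bernoulliFun_eq_sum, Finset.sum_range_succ, Finset.sum_range_zero, bernoulli,
    bernoulli'_zero, bernoulli'_one, bernoulli'_two, bernoulli'_three, bernoulli'_four,
    bernoulli'_five, bernoulli'_six]
  push_cast [Nat.choose]
  ring

/-- The `n`-th Fourier coefficient on `[0, 1]` of `u² (2u⁴ - 6u³ + 5u² - 1) = 2 B₆(u) - 1/21`.
The value at `n = 0` is set apart because the formula for `n ≠ 0` divides by zero there. -/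
noncomputable def weightCoeff (n : ℤ) : ℝ :=
  if n = 0 then -1 / 21 else 6! * 2 / (2 * π * n) ^ 6

theorem hasSum_weightCoeff_mul_fourier {x : ℝ} (hx : x ∈ Icc (0 : ℝ) 1) :
    HasSum (fun n : ℤ => (weightCoeff n : ℂ) * fourier n (x : UnitAddCircle))
      ((x ^ 2 * (2 * x ^ 4 - 6 * x ^ 3 + 5 * x ^ 2 - 1) : ℝ) : ℂ) := by
  have hconst := hasSum_ite_eq (0 : ℤ) (-1 / 21 : ℂ)
  convert! ((hasSum_fourier_bernoulliFun_two_mul three_ne_zero hx).mul_left (6! * 2 : ℂ)).add hconst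
    using 1
  · ext n
    rcases eq_or_ne n 0 with rfl | hn
    · simp [weightCoeff]
    · simp only [weightCoeff, hn, if_false, add_zero]
      push_cast
      ring
  · rw [show 2 * 3 = 6 from rfl, bernoulliFun_six]
    push_cast [Nat.factorial]
    ring

theorem hasSum_norm_fourierCoeffOn_sq_div_pow_six {V : ℝ → ℝ} (hV : IntegrableOn V (Ioc 0 1)) :
    HasSum (fun n : ℤ => 720 *
        (‖fourierCoeffOn zero_lt_one (fun t => (V t : ℂ)) n‖ ^ 2 / (2 * π * n) ^ 6))
      ((∫ u in (0 : ℝ)..1, u ^ 2 * (2 * u ^ 4 - 6 * u ^ 3 + 5 * u ^ 2 - 1) *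
        ∫ t in u..1, V t * V (t - u)) + (∫ t in (0 : ℝ)..1, V t) ^ 2 / 42) := by
  have hsum := (hasSum_mul_norm_fourierCoeffOn_sq
    (fun x hx => hasSum_weightCoeff_mul_fourier hx) hV).add
      (hasSum_ite_eq (0 : ℤ) ((∫ t in (0 : ℝ)..1, V t) ^ 2 / 21))
  convert! hsum.mul_left (1 / 2) using 1
  · ext n
    rcases eq_or_ne n 0 with rfl | hn
    · simp only [weightCoeff, if_true, fourierCoeffOn_zero_one_ofReal_zero, Complex.norm_real,
        Real.norm_eq_abs, sq_abs, Int.cast_zero, mul_zero]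
      ring
    · simp only [weightCoeff, hn, if_false, add_zero, Nat.factorial]
      push_cast
      ring
  · ring

theorem stmt_13_general (V : ℝ → ℝ)
    (hint : MeasureTheory.IntegrableOn V (Set.Icc 0 1))
    (f : ℝ → ℝ) (hf : ∀ u : ℝ, f u = u ^ 2 * (2 * u ^ 4 - 6 * u ^ 3 + 5 * u ^ 2 - 1))
    (A0 : ℝ)
    (hA0 : A0 = ∫ u in (0:ℝ)..1, f u * ∫ t in u..1, V t * V (t - u))
    (Vhat : ℤ → ℂ)
    (hVhat : ∀ n : ℤ, Vhat n =
      ∫ t in (0:ℝ)..1, (V t : ℂ) * Complex.exp (-2 * Real.pi * Complex.I * n * t)) :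
    A0 = 720 * ∑' n : ℤ, ‖Vhat n‖ ^ 2 / (2 * Real.pi * n) ^ 6 - (∫ t in (0:ℝ)..1, V t) ^ 2 / 42 ∧
    (¬ (∀ᵐ t ∂MeasureTheory.volume, t ∈ Set.Icc (0:ℝ) 1 → V t = ∫ s in (0:ℝ)..1, V s) →
      -(∫ t in (0:ℝ)..1, V t) ^ 2 / 42 < A0) := by
  obtain rfl : f = fun u => u ^ 2 * (2 * u ^ 4 - 6 * u ^ 3 + 5 * u ^ 2 - 1) := funext hf
  obtain rfl : Vhat = fourierCoeffOn zero_lt_one (fun t => (V t : ℂ)) :=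
    funext fun n => (hVhat n).trans (fourierCoeffOn_zero_one_eq_integral_exp _ n).symm
  have hV : IntegrableOn V (Ioc 0 1) := hint.mono_set Ioc_subset_Icc_self
  have hsum := hasSum_norm_fourierCoeffOn_sq_div_pow_six hV
  rw [← hA0] at hsum
  refine ⟨by rw [← tsum_mul_left, hsum.tsum_eq, add_sub_cancel_right], fun hne => ?_⟩
  obtain ⟨n, hn, hVn⟩ := exists_fourierCoeffOn_zero_one_ofReal_ne_zero hV hne
  have hpos := hsum.summable.tsum_pos (fun k => by positivity) n (by positivity)
  rw [hsum.tsum_eq] at hpos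
  linarith

/-- Fourier representation and positivity of
`A₀ = ∫₀¹ f(u) ∫_u¹ V(t)V(t−u) dt du` for mean-zero 1-periodic `V`. -/
theorem stmt_13 (V : ℝ → ℝ)
    (hper : ∀ t : ℝ, V (t + 1) = V t)
    (hint : MeasureTheory.IntegrableOn V (Set.Icc 0 1))
    (hmean : (∫ t in (0:ℝ)..1, V t) = 0)
    (f : ℝ → ℝ) (hf : ∀ u : ℝ, f u = u ^ 2 * (2 * u ^ 4 - 6 * u ^ 3 + 5 * u ^ 2 - 1))
    (A0 : ℝ)
    (hA0 : A0 = ∫ u in (0:ℝ)..1, f u * ∫ t in u..1, V t * V (t - u))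
    (Vhat : ℤ → ℂ)
    (hVhat : ∀ n : ℤ, Vhat n =
      ∫ t in (0:ℝ)..1, (V t : ℂ) * Complex.exp (-2 * Real.pi * Complex.I * n * t)) :
    A0 = 720 * ∑' n : ℤ, ‖Vhat n‖ ^ 2 / (2 * Real.pi * n) ^ 6 ∧
    (¬ (∀ᵐ t ∂MeasureTheory.volume, t ∈ Set.Icc (0:ℝ) 1 → V t = 0) → 0 < A0) := by
  simpa [hmean] using stmt_13_general V hint f hf A0 hA0 Vhat hVhat
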